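/- Let S = {S_1,…,S_K} ⊂ ℂ^{d×d} and suppose there exists a θ-ergodic Borel probability measure μ_* on Σ_K^+ which is extremal for S and has full support, supp(μ_*) = Σ_K^+. Then S has the spectral finiteness property: there exist n ≥ 1 and a word (i_1,…,i_n) with ρ(S) = ρ(S_{i_1}⋯S_{i_n})^{1/n}. -/

import Mathlib

open Filter MeasureTheory Topology
open scoped ENNReal

noncomputable section

/-- The one-sided shift on `Σ_K^+ = ℕ → Fin K`. -/
def shift (K : ℕ) : (ℕ → Fin K) → ℕ → Fin K := fun i n => i (n + 1)

/-- The ordered product `S_{w 0} ⋯ S_{w (n-1)}` along a finite word `w`. -/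
def finWordProd {d K : ℕ} (S : Fin K → Matrix (Fin d) (Fin d) ℂ) {n : ℕ}
    (w : Fin n → Fin K) : Matrix (Fin d) (Fin d) ℂ :=
  (List.ofFn fun t => S (w t)).prod

/-- The ordered product of the first `n` matrices along an infinite sequence. -/
def wordProd {d K : ℕ} (S : Fin K → Matrix (Fin d) (Fin d) ℂ)
    (i : ℕ → Fin K) (n : ℕ) : Matrix (Fin d) (Fin d) ℂ :=
  (List.ofFn fun t : Fin n => S (i t)).prod

/-- The (usual) spectral radius of a complex matrix, as a real number. -/
def specRad {d : ℕ} (A : Matrix (Fin d) (Fin d) ℂ) : ℝ :=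
  (spectralRadius ℂ A).toReal

/-- The generalized spectral radius of a finite family of matrices. -/
def genSpecRad {d K : ℕ} (S : Fin K → Matrix (Fin d) (Fin d) ℂ) : ℝ :=
  Filter.atTop.limsup fun n : ℕ =>
    ⨆ w : Fin n → Fin K, specRad (finWordProd S w) ^ ((n : ℝ)⁻¹)

/-- A submultiplicative matrix norm on `d × d` complex matrices. -/
structure MatrixNorm (d : ℕ) where
  N : Matrix (Fin d) (Fin d) ℂ → ℝ
  nonneg : ∀ A, 0 ≤ N A
  definite : ∀ A, N A = 0 ↔ A = 0
  homog : ∀ (c : ℂ) (A), N (c • A) = ‖c‖ * N A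
  triangle : ∀ A B, N (A + B) ≤ N A + N B
  submult : ∀ A B, N (A * B) ≤ N A * N B

/-- `μ` is extremal for `S` (w.r.t. the matrix norm `N`). -/
def IsExtremal {d K : ℕ} (S : Fin K → Matrix (Fin d) (Fin d) ℂ)
    (N : Matrix (Fin d) (Fin d) ℂ → ℝ) (μ : Measure (ℕ → Fin K)) : Prop :=
  ∀ᵐ i ∂μ, Tendsto (fun n : ℕ => N (wordProd S i n) ^ ((n : ℝ)⁻¹))
    atTop (𝓝 (genSpecRad S))

/-- `x` is a density point of `μ`. -/
def DensityPoint {K : ℕ} (μ : Measure (ℕ → Fin K)) (x : ℕ → Fin K) : Prop :=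
  ∀ U : Set (ℕ → Fin K), IsOpen U → x ∈ U → 0 < μ U

/-- `S` has the spectral finiteness property. -/
def HasFinitenessProperty {d K : ℕ} (S : Fin K → Matrix (Fin d) (Fin d) ℂ) : Prop :=
  ∃ n : ℕ, 1 ≤ n ∧ ∃ w : Fin n → Fin K,
    genSpecRad S = specRad (finWordProd S w) ^ ((n : ℝ)⁻¹)

/-- `x` is periodic of period `π ≥ 1`. -/
def IsPeriodic {K : ℕ} (x : ℕ → Fin K) (π : ℕ) : Prop :=
  1 ≤ π ∧ ∀ n, x (n + π) = x n

open Polynomial in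
theorem Matrix.isNilpotent_of_trace_aeval_mul_self_eq_zero {n : Type*} [Fintype n] [DecidableEq n]
    (X : Matrix n n ℂ) (h : ∀ f : ℂ[X], Matrix.trace (aeval X f * X) = 0) : IsNilpotent X := by
  obtain ⟨g, hg, hdvd⟩ := Polynomial.exists_eq_pow_rootMultiplicity_mul_and_not_dvd
    X.charpoly X.charpoly_monic.ne_zero 0
  set k := X.charpoly.rootMultiplicity 0
  simp only [map_zero, sub_zero] at hg hdvd
  have hcop : IsCoprime ((Polynomial.X : ℂ[X]) ^ (k + 1)) g :=
    IsCoprime.pow_left ((Polynomial.irreducible_X.coprime_iff_not_dvd).2 hdvd)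
  obtain ⟨a, b, hab⟩ := hcop
  have hz : aeval X (Polynomial.X ^ (k + 1) * g) = 0 := by
    rw [pow_succ', mul_assoc, ← hg, map_mul, Matrix.aeval_self_charpoly, mul_zero]
  have hidem : IsIdempotentElem (aeval X (a * Polynomial.X ^ (k + 1))) := by
    have : a * Polynomial.X ^ (k + 1) * (a * Polynomial.X ^ (k + 1)) =
        a * Polynomial.X ^ (k + 1) - a * b * (Polynomial.X ^ (k + 1) * g) := by
      linear_combination (a * Polynomial.X ^ (k + 1)) * hab
    rw [IsIdempotentElem, ← map_mul, this, map_sub, map_mul _ (a * b), hz, mul_zero, sub_zero]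
  have htr : Matrix.trace (aeval X (a * Polynomial.X ^ (k + 1))) = 0 := by
    have := h (a * Polynomial.X ^ k)
    rwa [pow_succ, ← mul_assoc, map_mul _ _ Polynomial.X, aeval_X]
  have hE : aeval X (a * Polynomial.X ^ (k + 1)) = 0 := by
    have h1 := LinearMap.IsIdempotentElem.trace_eq_zero_iff (hidem.map Matrix.toLinAlgEquiv')
    have h2 := Matrix.trace_toLin'_eq (aeval X (a * Polynomial.X ^ (k + 1)))
    rw [htr] at h2
    exact (map_eq_zero_iff _ Matrix.toLinAlgEquiv'.injective).1 (h1.1 h2)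
  refine ⟨k + 1, ?_⟩
  have : (Polynomial.X : ℂ[X]) ^ (k + 1) = (a * Polynomial.X ^ (k + 1)) * Polynomial.X ^ (k + 1)
      + b * (Polynomial.X ^ (k + 1) * g) := by
    linear_combination (-Polynomial.X ^ (k + 1)) * hab
  have h2 := congrArg (aeval X) this
  rw [map_add, map_mul, hE, map_mul, hz] at h2
  simpa using h2

theorem Subalgebra.mem_jacobson_of_trace_mul_eq_zero {n : Type*} [Fintype n] [DecidableEq n]
    (A : Subalgebra ℂ (Matrix n n ℂ)) (X : A)
    (h : ∀ Y ∈ A, Matrix.trace ((X : Matrix n n ℂ) * Y) = 0) : X ∈ Ring.jacobson A := by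
  rw [← Ideal.jacobson_bot, Ideal.mem_jacobson_iff]
  intro y
  have hn : IsNilpotent (y * X) := by
    have : IsNilpotent ((y : Matrix n n ℂ) * X) := by
      apply Matrix.isNilpotent_of_trace_aeval_mul_self_eq_zero
      intro f
      have hf : Polynomial.aeval ((y : Matrix n n ℂ) * X) f ∈ A := by
        have := (Polynomial.aeval (y * X) f).2
        rwa [Polynomial.aeval_subalgebra_coe] at this
      rw [← mul_assoc, Matrix.trace_mul_comm]
      exact h _ (A.mul_mem hf y.2)
    obtain ⟨k, hk⟩ := this
    exact ⟨k, Subtype.ext (by simpa using hk)⟩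
  obtain ⟨u, hu⟩ := hn.isUnit_add_one
  refine ⟨↑u⁻¹, ?_⟩
  have : (↑u⁻¹ : A) * y * X + ↑u⁻¹ - 1 = 0 := by
    rw [mul_assoc, ← mul_add_one, ← hu, Units.inv_mul, sub_self]
  rw [this]; exact zero_mem _

theorem norm_mul_list_prod_le_of_nilpotent {R α : Type*} [Ring R] (N : R → ℝ) (hN : ∀ x, 0 ≤ N x)
    (h0 : N 0 = 0)
    (hadd : ∀ x y, N (x + y) ≤ N x + N y) (hmul : ∀ x y, N (x * y) ≤ N x * N y)
    (I : Ideal R) [I.IsTwoSided] {m : ℕ} (hI : I ^ m = ⊥) (W : α → R) (a : α → ℝ) {H : ℝ}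
    (hH : 1 ≤ H) (hW : ∀ x, ∃ r ∈ I, N (W x - r) + N r / H ≤ a x) (l : List α) :
    ∀ i ≤ m, ∀ X ∈ I ^ i,
      N (X * (l.map W).prod) ≤ N X * H ^ (m - i) * (l.map a).prod := by
  have hH0 : 0 < H := by linarith
  have ha : ∀ x, 0 ≤ a x := fun x => by
    obtain ⟨r, -, hr⟩ := hW x
    exact le_trans (add_nonneg (hN _) (div_nonneg (hN _) hH0.le)) hr
  induction l with
  | nil =>
    intro i _ X _
    simpa using le_mul_of_one_le_right (hN X) (one_le_pow₀ hH)
  | cons x l ih =>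
    intro i hi X hX
    obtain ⟨r, hr, hx⟩ := hW x
    set P := (l.map a).prod
    have hP : 0 ≤ P := List.prod_nonneg (by simpa using fun y _ => ha y)
    rcases hi.eq_or_lt with rfl | hlt
    · rw [hI, Ideal.mem_bot] at hX
      simp [hX, h0]
    · have h1 := ih i hi (X * (W x - r)) ((I ^ i).mul_mem_right _ hX)
      have h2 := ih (i + 1) hlt (X * r) (by
        rw [Ideal.IsTwoSided.pow_add, Submodule.pow_one]; exact Ideal.mul_mem_mul hX hr)
      have hpow : H ^ (m - i) = H ^ (m - (i + 1)) * H := by rw [← pow_succ]; congr 1; omega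
      have hq : 0 ≤ H ^ (m - (i + 1)) := by positivity
      set q := H ^ (m - (i + 1))
      have e : X * ((x :: l).map W).prod = X * (W x - r) * (l.map W).prod
          + X * r * (l.map W).prod := by
        simp only [List.map_cons, List.prod_cons]; noncomm_ring
      calc N (X * ((x :: l).map W).prod) ≤ _ := by rw [e]; exact hadd _ _
        _ ≤ N (X * (W x - r)) * H ^ (m - i) * P + N (X * r) * q * P := add_le_add h1 h2
        _ ≤ (N X * N (W x - r)) * H ^ (m - i) * P + (N X * N r) * q * P := by
          gcongr
          · exact hmul _ _
          · exact hmul _ _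
        _ = N X * H ^ (m - i) * ((N (W x - r) + N r / H) * P) := by
          rw [hpow]; field_simp
        _ ≤ N X * H ^ (m - i) * (a x * P) := by
          have := hN X
          gcongr
        _ = _ := by simp [P]

theorem LinearMap.exists_comp_comp_eq {k V W : Type*} [Field k] [AddCommGroup V] [Module k V]
    [AddCommGroup W] [Module k W] (f : V →ₗ[k] W) : ∃ g : W →ₗ[k] V, f ∘ₗ g ∘ₗ f = f := by
  obtain ⟨g, hg⟩ := LinearMap.exists_rightInverse_of_surjective f.rangeRestrict
    (LinearMap.range_rangeRestrict f)
  obtain ⟨g', hg'⟩ := LinearMap.exists_extend g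
  refine ⟨g', LinearMap.ext fun v => ?_⟩
  have h1 : g' (f v) = g (f.rangeRestrict v) := by rw [← hg']; rfl
  have h2 := congrArg Subtype.val (LinearMap.congr_fun hg (f.rangeRestrict v))
  simpa [h1] using h2

/-- In the algebra spanned by a monoid of matrices, every element is, modulo the radical of the
trace form, a combination of fixed monoid elements with coefficients controlled by traces. -/
theorem Submonoid.exists_finset_trace_coeff {n : Type*} [Fintype n] [DecidableEq n]
    (M : Submonoid (Matrix n n ℂ)) :
    ∃ (s : Finset (Matrix n n ℂ)) (C : ℝ), (∀ t ∈ s, t ∈ M) ∧ 0 ≤ C ∧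
      ∀ A ∈ Algebra.adjoin ℂ (M : Set (Matrix n n ℂ)), ∃ c : s → ℂ,
        (∀ i, ‖c i‖ ≤ C * ‖fun j : s => Matrix.trace (A * (j : Matrix n n ℂ))‖) ∧
        ∀ B ∈ Algebra.adjoin ℂ (M : Set (Matrix n n ℂ)),
          Matrix.trace ((A - ∑ i, c i • (i : Matrix n n ℂ)) * B) = 0 := by
  have hspan : (Algebra.adjoin ℂ (M : Set (Matrix n n ℂ))).toSubmodule = Submodule.span ℂ M := by
    rw [Algebra.adjoin_eq_span, Submonoid.closure_eq]
  obtain ⟨s, hs, hsp⟩ := (Submodule.fg_span_iff_fg_span_finset_subset (M : Set (Matrix n n ℂ))).1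
    (IsNoetherian.noetherian (Submodule.span ℂ (M : Set (Matrix n n ℂ))))
  have hmem : ∀ A ∈ Algebra.adjoin ℂ (M : Set (Matrix n n ℂ)), ∃ c : s → ℂ,
      ∑ i, c i • (i : Matrix n n ℂ) = A := by
    intro A hA
    rw [← Subalgebra.mem_toSubmodule, hspan, hsp, Submodule.mem_span_finset'] at hA
    exact hA
  let f : (s → ℂ) →ₗ[ℂ] (s → ℂ) :=
    { toFun := fun c j => Matrix.trace ((∑ i, c i • (i : Matrix n n ℂ)) * (j : Matrix n n ℂ))
      map_add' := fun c c' => by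
        ext j; simp [add_smul, Finset.sum_add_distrib, add_mul]
      map_smul' := fun r c => by
        ext j; simp [mul_smul, ← Finset.smul_sum] }
  obtain ⟨g, hg⟩ := f.exists_comp_comp_eq
  let g' := LinearMap.toContinuousLinearMap g
  refine ⟨s, ‖g'‖, fun t ht => hs ht, norm_nonneg _, fun A hA => ?_⟩
  obtain ⟨c, rfl⟩ := hmem A hA
  refine ⟨g (f c), fun i => (norm_le_pi_norm _ i).trans (g'.le_opNorm (f c)), fun B hB => ?_⟩
  obtain ⟨b, rfl⟩ := hmem B hB
  have hfg : f (g (f c)) = f c := LinearMap.congr_fun hg c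
  rw [Finset.mul_sum, Matrix.trace_sum]
  refine Finset.sum_eq_zero fun j _ => ?_
  rw [mul_smul_comm, Matrix.trace_smul, sub_mul, Matrix.trace_sub, sub_eq_zero.2, smul_zero]
  exact (congrFun hfg j).symm

theorem integral_nonneg_of_birkhoffSum_lower_bound {Ω : Type*} [MeasurableSpace Ω] {μ : Measure Ω}
    [IsProbabilityMeasure μ] {T : Ω → Ω} (hT : MeasurePreserving T μ μ) {f : Ω → ℝ}
    (hf : Measurable f) {b c : ℝ} (hb : ∀ x, |f x| ≤ b) {g : ℕ → Ω → ℝ}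
    (hg : ∀ᵐ x ∂μ, ∀ᶠ n in atTop, g n x ≤ c + birkhoffSum T f n x)
    (hlim : ∀ᵐ x ∂μ, Tendsto (fun n : ℕ => g n x / n) atTop (𝓝 0)) : 0 ≤ ∫ x, f x ∂μ := by
  have hfi : Integrable f μ := .of_bound hf.aestronglyMeasurable b (.of_forall hb)
  have hfj : ∀ j, Integrable (fun x => f (T^[j] x)) μ := fun j =>
    (hT.iterate j).integrable_comp_of_integrable hfi
  have hint : ∀ j, ∫ x, f (T^[j] x) ∂μ = ∫ x, f x ∂μ := fun j => by
    have h := hT.iterate j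
    rw [← integral_map h.measurable.aemeasurable hf.aestronglyMeasurable, h.map_eq]
  have hsum : ∀ n, Integrable (birkhoffSum T f n) μ := fun n =>
    integrable_finsetSum _ fun j _ => hfj j
  have hsumint : ∀ n, ∫ x, birkhoffSum T f n x ∂μ = n * ∫ x, f x ∂μ := fun n => by
    simp only [birkhoffSum]
    rw [integral_finsetSum _ fun j _ => hfj j]
    simp [hint]
  have hcn : Tendsto (fun n : ℕ => c / n) atTop (𝓝 0) := tendsto_const_div_atTop_nhds_zero_nat c
  have hbound : ∀ (n : ℕ) x, |(c + birkhoffSum T f n x) / n| ≤ |c| + b := fun n x => by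
    have hb0 : 0 ≤ b := (abs_nonneg _).trans (hb x)
    rcases n.eq_zero_or_pos with rfl | hn
    · simpa using by positivity
    have hn1 : (1 : ℝ) ≤ n := by exact_mod_cast hn
    have h1 : |birkhoffSum T f n x| ≤ n * b := by
      refine (Finset.abs_sum_le_sum_abs _ _).trans ?_
      simpa using Finset.sum_le_sum fun j (_ : j ∈ Finset.range n) => hb (T^[j] x)
    rw [abs_div, Nat.abs_cast, div_le_iff₀ (by positivity)]
    calc |c + birkhoffSum T f n x| ≤ |c| + n * b := (abs_add_le _ _).trans (by gcongr)
      _ ≤ |c| * n + n * b := by gcongr; exact le_mul_of_one_le_right (abs_nonneg c) hn1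
      _ = _ := by ring
  have hmi : ∀ n : ℕ, Integrable (fun x => (c + birkhoffSum T f n x) / n) μ := fun n =>
    ((integrable_const c).add (hsum n)).div_const _
  have hlim0 : Tendsto (fun n : ℕ => ∫ x, min ((c + birkhoffSum T f n x) / n) 0 ∂μ) atTop
      (𝓝 (∫ _, (0 : ℝ) ∂μ)) := by
    refine tendsto_integral_of_dominated_convergence (fun _ => |c| + b)
      (fun n => ((hmi n).inf (integrable_const 0)).aestronglyMeasurable) (integrable_const _)
      (fun n => .of_forall fun x => ?_) ?_
    · have := hbound n x
      rw [Real.norm_eq_abs, abs_le]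
      rw [abs_le] at this
      have h0 := (abs_nonneg _).trans (hbound n x)
      exact ⟨le_min this.1 (by linarith), (min_le_right _ _).trans h0⟩
    · filter_upwards [hlim, hg] with x hx hgx
      have h1 : Tendsto (fun n : ℕ => min (g n x / n) 0) atTop (𝓝 0) := by
        simpa using hx.min (tendsto_const_nhds (x := (0 : ℝ)))
      refine tendsto_of_tendsto_of_tendsto_of_le_of_le' h1 tendsto_const_nhds ?_
        (.of_forall fun n => min_le_right _ _)
      filter_upwards [hgx] with n hn
      exact min_le_min_right _ (div_le_div_of_nonneg_right hn n.cast_nonneg)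
  rw [integral_zero] at hlim0
  have hlim1 : Tendsto (fun n : ℕ => c / n + ∫ x, f x ∂μ) atTop (𝓝 (∫ x, f x ∂μ)) := by
    simpa using hcn.add_const (∫ x, f x ∂μ)
  refine le_of_tendsto_of_tendsto hlim0 hlim1 ?_
  filter_upwards [eventually_gt_atTop 0] with n hn
  have hn0 : (n : ℝ) ≠ 0 := by positivity
  calc ∫ x, min ((c + birkhoffSum T f n x) / n) 0 ∂μ ≤ ∫ x, (c + birkhoffSum T f n x) / n ∂μ :=
        integral_mono ((hmi n).inf (integrable_const 0)) (hmi n) fun x => min_le_left _ _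
    _ = c / n + ∫ x, f x ∂μ := by
      rw [integral_div, integral_add (integrable_const c) (hsum n), hsumint]
      simp; field_simp

theorem shift_iterate_apply {K : ℕ} (a : ℕ) (x : ℕ → Fin K) (n : ℕ) :
    (shift K)^[a] x n = x (n + a) := by
  induction a generalizing x with
  | zero => rfl
  | succ a ih => rw [Function.iterate_succ_apply, ih, shift]; congr 1

theorem wordProd_succ {d K : ℕ} (S : Fin K → Matrix (Fin d) (Fin d) ℂ) (x : ℕ → Fin K) (n : ℕ) :
    wordProd S x (n + 1) = wordProd S x n * S (x n) := by
  rw [wordProd, List.ofFn_succ', List.concat_eq_append, List.prod_append]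
  simp [wordProd]

theorem wordProd_add {d K : ℕ} (S : Fin K → Matrix (Fin d) (Fin d) ℂ) (x : ℕ → Fin K) (a b : ℕ) :
    wordProd S x (a + b) = wordProd S x a * wordProd S ((shift K)^[a] x) b := by
  induction b with
  | zero => simp [wordProd]
  | succ b ih =>
    rw [← add_assoc, wordProd_succ, ih, wordProd_succ, mul_assoc, shift_iterate_apply, add_comm b]

theorem wordProd_mul {d K : ℕ} (S : Fin K → Matrix (Fin d) (Fin d) ℂ) (x : ℕ → Fin K) (L n : ℕ) :
    wordProd S x (L * n) =
      ((List.range L).map fun j => wordProd S (((shift K)^[n])^[j] x) n).prod := by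
  induction L with
  | zero => simp [wordProd]
  | succ L ih =>
    rw [List.range_succ, List.map_append, List.prod_append, ← ih, add_mul, one_mul, wordProd_add]
    simp [← Function.iterate_mul, mul_comm n]

theorem wordProd_eq_pow {d K : ℕ} (S : Fin K → Matrix (Fin d) (Fin d) ℂ) (x : ℕ → Fin K) {n : ℕ}
    {e : Fin K} (h : ∀ t < n, x t = e) : wordProd S x n = S e ^ n := by
  induction n with
  | zero => simp [wordProd]
  | succ n ih => rw [wordProd_succ, ih fun t ht => h t (by omega), h n n.lt_succ_self, pow_succ]

theorem wordProd_mem_closure {d K : ℕ} (S : Fin K → Matrix (Fin d) (Fin d) ℂ) (x : ℕ → Fin K)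
    (n : ℕ) : wordProd S x n ∈ Submonoid.closure (Set.range S) :=
  Submonoid.list_prod_mem _ fun A hA => by
    obtain ⟨t, rfl⟩ := (List.mem_ofFn' _ _).1 hA
    exact Submonoid.subset_closure ⟨_, rfl⟩

theorem Submonoid.exists_pow_trace_contraction {n : Type*} [Fintype n] [DecidableEq n]
    {M : Submonoid (Matrix n n ℂ)} {U : Matrix n n ℂ} (hU : U ∈ M)
    (hlim : Tendsto (fun k : ℕ => U ^ k) atTop (𝓝 0)) :
    ∃ k : ℕ, ∀ B ∈ M, ∀ z : ℝ, 0 ≤ z → (∀ t ∈ M, ‖Matrix.trace (t * B)‖ ≤ z) →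
      ∀ t ∈ M, ‖Matrix.trace (t * (U ^ k * B))‖ ≤ z / 2 := by
  obtain ⟨s, C, hs, hC, hcoef⟩ := M.exists_finset_trace_coeff
  have hMA : ∀ t ∈ M, t ∈ Algebra.adjoin ℂ (M : Set (Matrix n n ℂ)) :=
    fun t ht => Algebra.subset_adjoin ht
  have h1 : Tendsto (fun k : ℕ =>
      s.card * (C * ‖fun j : s => Matrix.trace (U ^ k * (j : Matrix n n ℂ))‖)) atTop (𝓝 0) := by
    have hc : Continuous fun A : Matrix n n ℂ =>
        s.card * (C * ‖fun j : s => Matrix.trace (A * (j : Matrix n n ℂ))‖) := by fun_prop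
    have := (hc.tendsto 0).comp hlim
    simpa [Function.comp_def, ← Pi.zero_def] using this
  obtain ⟨k, hk⟩ := (h1.eventually_lt_const (show (0 : ℝ) < 1 / 2 by norm_num)).exists
  refine ⟨k, fun B hB z hz hBz t ht => ?_⟩
  obtain ⟨c, hc, hc0⟩ := hcoef (U ^ k) (hMA _ (pow_mem hU k))
  have h2 := hc0 (B * t) (hMA _ (mul_mem hB ht))
  rw [sub_mul, Matrix.trace_sub, sub_eq_zero, ← mul_assoc, Matrix.trace_mul_comm, Finset.sum_mul,
    Matrix.trace_sum] at h2
  rw [h2]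
  have h3 : ∀ i ∈ (Finset.univ : Finset s),
      ‖Matrix.trace (c i • (i : Matrix n n ℂ) * (B * t))‖ ≤
        C * ‖fun j : s => Matrix.trace (U ^ k * (j : Matrix n n ℂ))‖ * z := fun i _ => by
    rw [smul_mul_assoc, Matrix.trace_smul, norm_smul]
    refine mul_le_mul (hc i) ?_ (norm_nonneg _) (by positivity)
    rw [← mul_assoc, Matrix.trace_mul_comm, ← mul_assoc]
    exact hBz _ (mul_mem ht (hs _ i.2))
  refine (norm_sum_le_of_le _ h3).trans ?_
  rw [Finset.sum_const, Finset.card_univ, Fintype.card_coe, nsmul_eq_mul, ← mul_assoc]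
  calc _ ≤ 1 / 2 * z := by gcongr
    _ = z / 2 := by ring

theorem eventually_trace_wordProd_le {d K : ℕ} (S : Fin K → Matrix (Fin d) (Fin d) ℂ) {D : ℝ}
    (hD0 : 0 ≤ D)
    (hD : ∀ t ∈ Submonoid.closure (Set.range S), ‖Matrix.trace t‖ ≤ D) {e : Fin K} {k : ℕ}
    (hk : ∀ B ∈ Submonoid.closure (Set.range S), ∀ z : ℝ, 0 ≤ z →
      (∀ t ∈ Submonoid.closure (Set.range S), ‖Matrix.trace (t * B)‖ ≤ z) →
      ∀ t ∈ Submonoid.closure (Set.range S), ‖Matrix.trace (t * (S e ^ k * B))‖ ≤ z / 2) (j : ℕ) :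
    ∀ x : ℕ → Fin K, (∃ᶠ n in atTop, ∀ t < k, (shift K)^[n] x t = e) →
      ∃ N₀, ∀ N ≥ N₀, ∀ t ∈ Submonoid.closure (Set.range S),
        ‖Matrix.trace (t * wordProd S x N)‖ ≤ D / 2 ^ j := by
  induction j with
  | zero =>
    intro x _
    exact ⟨0, fun N _ t ht => by simpa using hD _ (mul_mem ht (wordProd_mem_closure S x N))⟩
  | succ j ih =>
    intro x hx
    obtain ⟨a, ha⟩ := hx.exists
    obtain ⟨N₀, hN₀⟩ := ih ((shift K)^[a + k] x) (by
      rw [frequently_atTop] at hx ⊢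
      intro n
      obtain ⟨b, hb, hb'⟩ := hx (n + (a + k))
      refine ⟨b - (a + k), by omega, ?_⟩
      rwa [← Function.iterate_add_apply, Nat.sub_add_cancel (by omega)])
    refine ⟨a + k + N₀, fun N hN t ht => ?_⟩
    obtain ⟨b, rfl⟩ := Nat.exists_eq_add_of_le (show a + k ≤ N by omega)
    rw [wordProd_add, wordProd_add, wordProd_eq_pow S _ ha, mul_assoc, ← mul_assoc t, pow_succ,
      ← div_div]
    exact hk _ (wordProd_mem_closure S _ b) _ (by positivity) (hN₀ b (by omega)) _
      (mul_mem ht (wordProd_mem_closure S x a))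

theorem exists_norm_wordProd_mul_le {d K : ℕ} (S : Fin K → Matrix (Fin d) (Fin d) ℂ)
    (ν : MatrixNorm d) {D : ℝ}
    (hD : ∀ t ∈ Submonoid.closure (Set.range S), ‖Matrix.trace t‖ ≤ D) :
    ∃ (s : Finset (Matrix (Fin d) (Fin d) ℂ)) (C : ℝ),
      (∀ t ∈ s, t ∈ Submonoid.closure (Set.range S)) ∧ 0 ≤ C ∧
      ∀ (δ : ℝ) (n : ℕ), 0 < δ → ∃ G : ℝ, 0 < G ∧ ∀ (x : ℕ → Fin K) (L : ℕ),
        ν.N (wordProd S x (L * n)) ≤ G * ∏ j ∈ Finset.range L,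
          (C * ‖fun t : s => Matrix.trace (wordProd S (((shift K)^[n])^[j] x) n *
            (t : Matrix (Fin d) (Fin d) ℂ))‖ + δ) := by
  set M := Submonoid.closure (Set.range S)
  set A := Algebra.adjoin ℂ (M : Set (Matrix (Fin d) (Fin d) ℂ))
  have hMA : ∀ t ∈ M, t ∈ A := fun t ht => Algebra.subset_adjoin ht
  obtain ⟨s, C, hs, hC, hcoef⟩ := M.exists_finset_trace_coeff
  set C' := C * ∑ t : s, ν.N (t : Matrix (Fin d) (Fin d) ℂ)
  have hC' : 0 ≤ C' := mul_nonneg hC (Finset.sum_nonneg fun _ _ => ν.nonneg _)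
  have hsum : ∀ (c : s → ℂ) (z : ℝ), (∀ i, ‖c i‖ ≤ C * z) →
      ν.N (∑ i, c i • (i : Matrix (Fin d) (Fin d) ℂ)) ≤ C' * z := by
    intro c z hc
    refine (Finset.le_sum_of_subadditive ν.N ((ν.definite 0).2 rfl).le ν.triangle _ _).trans ?_
    rw [show C' * z = C * z * ∑ t : s, ν.N (t : Matrix (Fin d) (Fin d) ℂ) by simp only [C']; ring,
      Finset.mul_sum]
    refine Finset.sum_le_sum fun i _ => ?_
    rw [ν.homog]
    exact mul_le_mul_of_nonneg_right (hc i) (ν.nonneg _)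
  have : IsArtinianRing A := IsArtinianRing.of_finite ℂ A
  obtain ⟨m, hm⟩ := IsSemiprimaryRing.isNilpotent (R := A)
  refine ⟨s, C', hs, hC', fun δ n hδ => ?_⟩
  obtain ⟨b, hb⟩ := (Set.finite_range fun w : Fin n → Fin K => ν.N (finWordProd S w)).bddAbove
  have hb' : ∀ x, ν.N (wordProd S x n) ≤ b := fun x => hb ⟨fun t => x t, rfl⟩
  set pm : (ℕ → Fin K) → ℝ := fun x =>
    ‖fun t : s => Matrix.trace (wordProd S x n * (t : Matrix (Fin d) (Fin d) ℂ))‖ with hpm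
  have hneg : ∀ X, ν.N (-X) = ν.N X := fun X => by
    rw [← neg_one_smul ℂ, ν.homog]; simp
  have hpmD : ∀ x, pm x ≤ |D| := fun x => by
    refine (pi_norm_le_iff_of_nonneg (abs_nonneg D)).2 fun t => (hD _ ?_).trans (le_abs_self D)
    exact mul_mem (wordProd_mem_closure S x n) (hs _ t.2)
  set H := max 1 ((b + C' * |D|) / δ)
  have hH0 : 0 < H := lt_of_lt_of_le one_pos (le_max_left _ _)
  have key := fun x : ℕ → Fin K => norm_mul_list_prod_le_of_nilpotent
    (fun X : A => ν.N X) (fun _ => ν.nonneg _) ((ν.definite 0).2 rfl) (fun X Y => ν.triangle X Y)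
    (fun X Y => ν.submult X Y) (Ring.jacobson A) hm
    (fun j : ℕ => ⟨wordProd S (((shift K)^[n])^[j] x) n, hMA _ (wordProd_mem_closure S _ n)⟩)
    (fun j => C' * pm (((shift K)^[n])^[j] x) + δ) (H := H) (le_max_left _ _) (fun j => by
      set y := ((shift K)^[n])^[j] x
      obtain ⟨c, hc, hc0⟩ := hcoef _ (hMA _ (wordProd_mem_closure S y n))
      set V : Matrix (Fin d) (Fin d) ℂ := ∑ i, c i • (i : Matrix (Fin d) (Fin d) ℂ)
      have hV : V ∈ A := A.sum_mem fun i _ => A.smul_mem (hMA _ (hs _ i.2)) _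
      have hVN : ν.N V ≤ C' * pm y := hsum c _ hc
      refine ⟨⟨wordProd S y n - V, A.sub_mem (hMA _ (wordProd_mem_closure S y n)) hV⟩,
        A.mem_jacobson_of_trace_mul_eq_zero _ hc0, ?_⟩
      have h1 : ν.N (wordProd S y n - V) ≤ b + C' * |D| := by
        rw [sub_eq_add_neg]
        refine (ν.triangle _ _).trans (add_le_add (hb' y) ?_)
        rw [hneg]
        exact hVN.trans (by gcongr; exact hpmD y)
      simp only [AddSubgroupClass.coe_sub, sub_sub_cancel]
      refine add_le_add hVN ?_
      rw [div_le_iff₀ hH0]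
      refine h1.trans ?_
      have := le_max_right 1 ((b + C' * |D|) / δ)
      rwa [div_le_iff₀ hδ, mul_comm _ δ] at this)
  refine ⟨(ν.N 1 + 1) * H ^ m, by have := ν.nonneg 1; positivity, fun x L => ?_⟩
  have h1 := key x (List.range L) 0 (Nat.zero_le m) 1 (by
    rw [Submodule.pow_zero]; simp)
  have hprod : 0 ≤ ((List.range L).map fun j => C' * pm (((shift K)^[n])^[j] x) + δ).prod :=
    List.prod_nonneg (by
      simp only [List.mem_map, forall_exists_index, and_imp]
      rintro _ j _ rfl
      have : 0 ≤ pm (((shift K)^[n])^[j] x) := norm_nonneg _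
      positivity)
  rw [Finset.prod_eq_multiset_prod, Finset.range_val, Multiset.range, Multiset.map_coe,
    Multiset.prod_coe]
  calc ν.N (wordProd S x (L * n)) = _ := by
        rw [wordProd_mul]
        congr 1
        rw [← A.coe_val, one_mul, map_list_prod, List.map_map]
        rfl
    _ ≤ _ := h1
    _ ≤ _ := by
      refine mul_le_mul_of_nonneg_right ?_ hprod
      rw [Nat.sub_zero]
      have : ν.N ((1 : A) : Matrix (Fin d) (Fin d) ℂ) = ν.N 1 := rfl
      rw [this]
      gcongr
      linarith

theorem not_tendsto_norm_wordProd_rpow_one {d K : ℕ} (S : Fin K → Matrix (Fin d) (Fin d) ℂ)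
    (ν : MatrixNorm d) {D : ℝ} (hD0 : 0 ≤ D)
    (hD : ∀ t ∈ Submonoid.closure (Set.range S), ‖Matrix.trace t‖ ≤ D) {e : Fin K}
    (he : Tendsto (fun k : ℕ => S e ^ k) atTop (𝓝 0))
    (μ : Measure (ℕ → Fin K)) [IsProbabilityMeasure μ] (hμ : MeasurePreserving (shift K) μ μ)
    (hsupp : DensityPoint μ fun _ => e) :
    ¬ ∀ᵐ x ∂μ, Tendsto (fun n : ℕ => ν.N (wordProd S x n) ^ ((n : ℝ)⁻¹)) atTop (𝓝 1) := by
  intro hlim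
  obtain ⟨k, hk⟩ := Submonoid.exists_pow_trace_contraction
    (M := Submonoid.closure (Set.range S)) (Submonoid.subset_closure ⟨e, rfl⟩) he
  obtain ⟨s, C, hs, hC, hbd⟩ := exists_norm_wordProd_mul_le S ν hD
  set pm : ℕ → (ℕ → Fin K) → ℝ := fun n x =>
    ‖fun t : s => Matrix.trace (wordProd S x n * (t : Matrix (Fin d) (Fin d) ℂ))‖ with hpm
  have hpm0 : ∀ n x, 0 ≤ pm n x := fun n x => norm_nonneg _
  have hpmD : ∀ n x, pm n x ≤ D := fun n x =>
    (pi_norm_le_iff_of_nonneg hD0).2 fun t =>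
      hD _ (mul_mem (wordProd_mem_closure S x n) (hs _ t.2))
  have hpmm : ∀ n, Measurable (pm n) := fun n =>
    (Measurable.of_discrete (f := fun w : Fin n → Fin K =>
      ‖fun t : s => Matrix.trace (finWordProd S w * (t : Matrix (Fin d) (Fin d) ℂ))‖)).comp
      (measurable_pi_lambda _ fun t : Fin n => measurable_pi_apply (t : ℕ))
  set U : Set (ℕ → Fin K) := {x | ∀ t < k, x t = e}
  have hUeq : U = ⋂ t ∈ Set.Iio k, (fun x : ℕ → Fin K => x t) ⁻¹' {e} := by ext; simp [U]
  have hUo : IsOpen U := by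
    rw [hUeq]
    exact (Set.finite_Iio k).isOpen_biInter fun t _ =>
      (isOpen_discrete _).preimage (continuous_apply t)
  have hUp : 0 < μ U := hsupp U hUo fun t _ => rfl
  have hrec : ∀ᵐ x ∂μ, x ∈ U → ∃ᶠ n in atTop, (shift K)^[n] x ∈ U :=
    hμ.conservative.ae_mem_imp_frequently_image_mem hUo.measurableSet.nullMeasurableSet
  set p := μ.real U
  have hp : 0 < p := ENNReal.toReal_pos hUp.ne' (measure_ne_top _ _)
  set E₀ := C * D + 1
  have hE₀ : 1 ≤ E₀ := by simp only [E₀]; nlinarith [mul_nonneg hC hD0]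
  have hlE₀ : 0 ≤ Real.log E₀ := Real.log_nonneg hE₀
  set δ := Real.exp (-(2 * (Real.log E₀ + 1)) / p) / 2 with hδdef
  have hδ : 0 < δ := by positivity
  have hlδ : Real.log (2 * δ) = -(2 * (Real.log E₀ + 1)) / p := by
    rw [hδdef, mul_div_cancel₀ _ two_ne_zero, Real.log_exp]
  have hlδ0 : Real.log (2 * δ) < 0 := by
    rw [hlδ]; exact div_neg_of_neg_of_pos (by linarith) hp
  have hδ1 : δ < 1 := by
    by_contra! h
    exact absurd (Real.log_nonneg (show 1 ≤ 2 * δ by linarith)) (by linarith)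
  set G : ℕ → Set (ℕ → Fin K) := fun N => {x | ∀ n ≥ N, C * pm n x ≤ δ}
  have hGmono : Monotone G := fun a b hab x hx n hn => hx n (hab.trans hn)
  have hUG : μ U ≤ μ (⋃ N, G N) := by
    refine measure_mono_ae ?_
    filter_upwards [hrec] with x hx hxU
    have hz : Tendsto (fun j : ℕ => C * (D / 2 ^ j)) atTop (𝓝 0) := by
      have h := (tendsto_pow_atTop_nhds_zero_of_lt_one (r := (1 / 2 : ℝ)) (by norm_num)
        (by norm_num)).const_mul (C * D)
      rw [mul_zero] at h
      refine h.congr fun j => ?_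
      rw [div_pow, one_pow]; ring
    obtain ⟨j, hj⟩ := (hz.eventually_lt_const hδ).exists
    obtain ⟨N₀, hN₀⟩ := eventually_trace_wordProd_le S hD0 hD hk j x (hx hxU)
    refine Set.mem_iUnion.2 ⟨N₀, fun n hn => le_trans ?_ hj.le⟩
    refine mul_le_mul_of_nonneg_left ?_ hC
    refine (pi_norm_le_iff_of_nonneg (by positivity)).2 fun t => ?_
    rw [Matrix.trace_mul_comm]
    exact hN₀ n hn _ (hs _ t.2)
  have hhalf : μ U / 2 < μ (⋃ N, G N) :=
    (ENNReal.half_lt_self hUp.ne' (measure_ne_top _ _)).trans_le hUG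
  obtain ⟨N, hN⟩ := ((tendsto_measure_iUnion_atTop hGmono).eventually_const_lt hhalf).exists
  set n := max N 1
  have hn1 : 0 < n := lt_of_lt_of_le one_pos (le_max_right _ _)
  set E : Set (ℕ → Fin K) := {x | C * pm n x ≤ δ}
  have hEm : MeasurableSet E := measurableSet_le ((hpmm n).const_mul C) measurable_const
  have hE : p / 2 ≤ μ.real E := by
    have h : μ U / 2 ≤ μ E := hN.le.trans (measure_mono fun x hx => hx n (le_max_left _ _))
    have := ENNReal.toReal_mono (measure_ne_top _ _) h
    simpa [p, Measure.real] using this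
  set f : (ℕ → Fin K) → ℝ := fun x => Real.log (C * pm n x + δ)
  have hpos : ∀ x, δ ≤ C * pm n x + δ := fun x => by
    have := mul_nonneg hC (hpm0 n x); linarith
  have hfE₀ : ∀ x, f x ≤ Real.log E₀ := fun x => by
    refine Real.log_le_log (hδ.trans_le (hpos x)) ?_
    have := mul_le_mul_of_nonneg_left (hpmD n x) hC
    simp only [E₀]; linarith
  have hfm : Measurable f := (((hpmm n).const_mul C).add_const δ).log
  have hfb : ∀ x, |f x| ≤ |Real.log δ| + |Real.log E₀| := fun x => by
    have h1 : Real.log δ ≤ f x := Real.log_le_log hδ (hpos x)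
    have h2 := hfE₀ x
    have h3 := neg_abs_le (Real.log δ)
    have h4 := le_abs_self (Real.log E₀)
    rw [abs_le]
    constructor <;> linarith [abs_nonneg (Real.log δ), abs_nonneg (Real.log E₀)]
  have hneg : ∫ x, f x ∂μ < 0 := by
    have h1 : ∫ x, f x ∂μ ≤
        ∫ x, (Real.log E₀ + E.indicator (fun _ => Real.log (2 * δ)) x) ∂μ := by
      refine integral_mono (.of_bound hfm.aestronglyMeasurable _ (.of_forall hfb))
        ((integrable_const _).add ((integrable_const _).indicator hEm)) fun x => ?_
      by_cases hx : x ∈ E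
      · simp only [Set.indicator_of_mem hx]
        have : f x ≤ Real.log (2 * δ) := by
          refine Real.log_le_log (hδ.trans_le (hpos x)) ?_
          have : C * pm n x ≤ δ := hx
          linarith
        linarith
      · simpa [Set.indicator_of_notMem hx] using hfE₀ x
    rw [integral_add (integrable_const _) ((integrable_const _).indicator hEm),
      integral_indicator_const _ hEm] at h1
    simp only [integral_const, probReal_univ, smul_eq_mul] at h1
    have h2 : μ.real E * Real.log (2 * δ) ≤ p / 2 * Real.log (2 * δ) :=
      mul_le_mul_of_nonpos_right hE hlδ0.le
    have h3 : p / 2 * Real.log (2 * δ) = -(Real.log E₀ + 1) := by rw [hlδ]; field_simp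
    linarith
  obtain ⟨B, hB, hBx⟩ := hbd δ n hδ
  have hmul : ∀ x, Tendsto (fun n : ℕ => ν.N (wordProd S x n) ^ ((n : ℝ)⁻¹)) atTop (𝓝 1) →
      Tendsto (fun L : ℕ => ν.N (wordProd S x (L * n)) ^ (((L * n : ℕ) : ℝ)⁻¹)) atTop (𝓝 1) :=
    fun x hx => hx.comp (tendsto_id.atTop_mul_const' hn1)
  refine hneg.not_ge (integral_nonneg_of_birkhoffSum_lower_bound (hμ.iterate n) hfm hfb
    (c := Real.log B) (g := fun L x => Real.log (ν.N (wordProd S x (L * n)))) ?_ ?_)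
  · filter_upwards [hlim] with x hx
    filter_upwards [(hmul x hx).eventually_const_lt one_pos, eventually_gt_atTop 0] with L hL hL0
    have hNpos : 0 < ν.N (wordProd S x (L * n)) := by
      refine (ν.nonneg _).lt_of_ne fun h => hL.ne ?_
      rw [← h, Real.zero_rpow]
      have : 0 < L * n := Nat.mul_pos hL0 hn1
      positivity
    refine (Real.log_le_log hNpos (hBx x L)).trans ?_
    have hne : ∀ j ∈ Finset.range L, C * pm n (((shift K)^[n])^[j] x) + δ ≠ 0 := fun j _ =>
      (hδ.trans_le (hpos _)).ne'
    rw [Real.log_mul hB.ne' (Finset.prod_ne_zero_iff.2 hne), Real.log_prod hne]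
    rfl
  · filter_upwards [hlim] with x hx
    have h1 := ((Real.continuousAt_log one_ne_zero).tendsto.comp (hmul x hx)).const_mul (n : ℝ)
    rw [Real.log_one, mul_zero] at h1
    refine h1.congr' ?_
    filter_upwards [(hmul x hx).eventually_const_lt one_pos, eventually_gt_atTop 0] with L hL hL0
    have hNpos : 0 < ν.N (wordProd S x (L * n)) := by
      refine (ν.nonneg _).lt_of_ne fun h => hL.ne ?_
      rw [← h, Real.zero_rpow]
      have : 0 < L * n := Nat.mul_pos hL0 hn1
      positivity
    simp only [Function.comp_apply]
    rw [Real.log_rpow hNpos]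
    push_cast
    field_simp

open scoped Matrix.Norms.Operator in
theorem spectralRadius_le_norm_mul_norm_one {d : ℕ} (A : Matrix (Fin d) (Fin d) ℂ) :
    spectralRadius ℂ A ≤ ENNReal.ofReal (‖A‖ * ‖(1 : Matrix (Fin d) (Fin d) ℂ)‖) := by
  refine iSup₂_le fun k hk => ?_
  rw [← enorm_eq_nnnorm, ← ofReal_norm]
  exact ENNReal.ofReal_le_ofReal (spectrum.norm_le_norm_mul_of_mem hk)

open scoped Matrix.Norms.Operator in
theorem specRad_le_norm_mul_norm_one {d : ℕ} (A : Matrix (Fin d) (Fin d) ℂ) :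
    specRad A ≤ ‖A‖ * ‖(1 : Matrix (Fin d) (Fin d) ℂ)‖ :=
  ENNReal.toReal_le_of_le_ofReal (by positivity) (spectralRadius_le_norm_mul_norm_one A)

theorem spectralRadius_ne_top {d : ℕ} (A : Matrix (Fin d) (Fin d) ℂ) : spectralRadius ℂ A ≠ ⊤ :=
  ((spectralRadius_le_norm_mul_norm_one A).trans_lt ENNReal.ofReal_lt_top).ne

theorem specRad_nonneg {d : ℕ} (A : Matrix (Fin d) (Fin d) ℂ) : 0 ≤ specRad A :=
  ENNReal.toReal_nonneg

theorem norm_le_specRad_of_mem_spectrum {d : ℕ} {A : Matrix (Fin d) (Fin d) ℂ} {k : ℂ}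
    (hk : k ∈ spectrum ℂ A) : ‖k‖ ≤ specRad A := by
  have h : (‖k‖₊ : ℝ≥0∞) ≤ spectralRadius ℂ A := le_iSup₂_of_le k hk le_rfl
  simpa [specRad] using ENNReal.toReal_mono (spectralRadius_ne_top A) h

theorem norm_trace_le_card_mul_specRad {d : ℕ} (A : Matrix (Fin d) (Fin d) ℂ) :
    ‖Matrix.trace A‖ ≤ d * specRad A := by
  rw [Matrix.trace_eq_sum_roots_charpoly]
  have h1 : ∀ k ∈ A.charpoly.roots, ‖k‖ ≤ specRad A := fun k hk =>
    norm_le_specRad_of_mem_spectrum (Matrix.mem_spectrum_iff_isRoot_charpoly.2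
      (Polynomial.isRoot_of_mem_roots hk))
  refine (norm_multiset_sum_le _).trans ?_
  refine (Multiset.sum_le_card_nsmul _ (specRad A)
    (Multiset.forall_mem_map_iff.2 h1)).trans ?_
  rw [Multiset.card_map, nsmul_eq_mul]
  refine mul_le_mul_of_nonneg_right ?_ (specRad_nonneg A)
  have := A.charpoly.card_roots'
  rw [Matrix.charpoly_natDegree_eq_dim, Fintype.card_fin] at this
  exact_mod_cast this

theorem specRad_pow_le {d : ℕ} (A : Matrix (Fin d) (Fin d) ℂ) {n : ℕ} (hn : n ≠ 0) :
    specRad A ^ n ≤ specRad (A ^ n) := by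
  rw [specRad, ← ENNReal.toReal_pow]
  exact ENNReal.toReal_mono (spectralRadius_ne_top _) (spectrum.spectralRadius_pow_le A n hn)

open scoped Matrix.Norms.Operator in
theorem tendsto_inv_smul_pow_of_specRad_lt {d : ℕ} (A : Matrix (Fin d) (Fin d) ℂ) {r : ℝ}
    (hr : specRad A < r) : Tendsto (fun k : ℕ => ((r : ℂ)⁻¹ • A) ^ k) atTop (𝓝 0) := by
  obtain ⟨r', h1, h2⟩ := exists_between hr
  have hr'0 : 0 < r' := (specRad_nonneg A).trans_lt h1
  have hr0 : 0 < r := hr'0.trans h2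
  have hlt : spectralRadius ℂ A < ENNReal.ofReal r' := by
    rwa [ENNReal.lt_ofReal_iff_toReal_lt (spectralRadius_ne_top A)]
  refine squeeze_zero_norm' ?_ (tendsto_pow_atTop_nhds_zero_of_lt_one (r := r' / r)
    (by positivity) ((div_lt_one hr0).2 h2))
  filter_upwards [(spectrum.pow_norm_pow_one_div_tendsto_nhds_spectralRadius A).eventually_lt_const
    hlt, eventually_gt_atTop 0] with k hk hk0
  have h3 : ‖A ^ k‖ ^ (1 / k : ℝ) < r' := (ENNReal.ofReal_lt_ofReal_iff hr'0).1 hk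
  have h4 : ‖A ^ k‖ ≤ r' ^ k := by
    have := pow_le_pow_left₀ (by positivity) h3.le k
    rwa [one_div, Real.rpow_inv_natCast_pow (norm_nonneg _) hk0.ne'] at this
  rw [smul_pow, norm_smul, norm_pow, norm_inv, Complex.norm_real, Real.norm_of_nonneg hr0.le,
    div_pow, inv_pow, inv_mul_eq_div]
  gcongr

theorem finWordProd_eq_wordProd {d K : ℕ} (S : Fin K → Matrix (Fin d) (Fin d) ℂ) {n : ℕ}
    (w : Fin n → Fin K) (hn : 0 < n) :
    finWordProd S w = wordProd S (fun t => w ⟨t % n, Nat.mod_lt t hn⟩) n := by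
  simp only [finWordProd, wordProd]
  congr 2
  ext1 t
  simp [Nat.mod_eq_of_lt t.2]

theorem exists_finWordProd_eq_pow {d K : ℕ} (S : Fin K → Matrix (Fin d) (Fin d) ℂ) {n : ℕ}
    (w : Fin n → Fin K) (hn : 0 < n) (k : ℕ) :
    ∃ v : Fin (k * n) → Fin K, finWordProd S v = finWordProd S w ^ k := by
  set x : ℕ → Fin K := fun t => w ⟨t % n, Nat.mod_lt t hn⟩
  refine ⟨fun t => x t, ?_⟩
  have hx : (shift K)^[n] x = x := by
    ext1 t; simp [shift_iterate_apply, x]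
  change wordProd S x (k * n) = _
  rw [wordProd_mul, finWordProd_eq_wordProd S w hn]
  simp only [Function.iterate_fixed hx]
  simp [x]

open scoped Matrix.Norms.Operator in
theorem norm_list_prod_map_le {d K : ℕ} (S : Fin K → Matrix (Fin d) (Fin d) ℂ)
    (l : List (Fin K)) :
    ‖(l.map S).prod‖ ≤ ‖(1 : Matrix (Fin d) (Fin d) ℂ)‖ * (∑ i, ‖S i‖) ^ l.length := by
  induction l with
  | nil => simp
  | cons i l ih =>
    rw [List.map_cons, List.prod_cons, List.length_cons, pow_succ', mul_left_comm]
    exact (norm_mul_le _ _).trans (mul_le_mul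
      (Finset.single_le_sum (f := fun i => ‖S i‖) (fun _ _ => norm_nonneg _) (Finset.mem_univ i))
      ih (norm_nonneg _) (Finset.sum_nonneg fun _ _ => norm_nonneg _))

open scoped Matrix.Norms.Operator in
theorem exists_specRad_finWordProd_le {d K : ℕ} (S : Fin K → Matrix (Fin d) (Fin d) ℂ) :
    ∃ c m : ℝ, 1 ≤ c ∧ 0 ≤ m ∧ ∀ (n : ℕ) (w : Fin n → Fin K),
      specRad (finWordProd S w) ≤ m ^ n * c := by
  obtain ⟨c, hc⟩ : ∃ c : ℝ, c = ‖(1 : Matrix (Fin d) (Fin d) ℂ)‖ := ⟨_, rfl⟩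
  obtain ⟨m, hm⟩ : ∃ m : ℝ, m = ∑ i, ‖S i‖ := ⟨_, rfl⟩
  refine ⟨max 1 (c * c), m, le_max_left _ _,
    hm ▸ Finset.sum_nonneg fun _ _ => norm_nonneg _, fun n w => ?_⟩
  have hm0 : 0 ≤ m := hm ▸ Finset.sum_nonneg fun _ _ => norm_nonneg _
  have hc0 : 0 ≤ c := hc ▸ norm_nonneg _
  have h := norm_list_prod_map_le S (List.ofFn w)
  rw [List.map_ofFn, List.length_ofFn, ← hc, ← hm] at h
  have h1 := specRad_le_norm_mul_norm_one (finWordProd S w)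
  rw [← hc] at h1
  calc specRad (finWordProd S w) ≤ c * m ^ n * c :=
        h1.trans (mul_le_mul_of_nonneg_right h hc0)
    _ = m ^ n * (c * c) := by ring
    _ ≤ m ^ n * max 1 (c * c) := by gcongr; exact le_max_right _ _

theorem exists_specRad_finWordProd_rpow_le {d K : ℕ}
    (S : Fin K → Matrix (Fin d) (Fin d) ℂ) :
    ∃ B : ℝ, 0 ≤ B ∧ ∀ (n : ℕ) (w : Fin n → Fin K),
      specRad (finWordProd S w) ^ ((n : ℝ)⁻¹) ≤ B := by
  obtain ⟨c, m, hc, hm, h⟩ := exists_specRad_finWordProd_le S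
  have hc0 : 0 ≤ c := zero_le_one.trans hc
  refine ⟨m * c + 1, by positivity, fun n w => ?_⟩
  rcases n.eq_zero_or_pos with rfl | hn
  · simp only [Nat.cast_zero, inv_zero, Real.rpow_zero]
    linarith [mul_nonneg hm hc0]
  have h1 : specRad (finWordProd S w) ≤ (m * c) ^ n := by
    rw [mul_pow]
    exact (h n w).trans (mul_le_mul_of_nonneg_left (le_self_pow₀ hc hn.ne') (by positivity))
  refine (Real.rpow_le_rpow (specRad_nonneg _) h1 (by positivity)).trans ?_
  rw [Real.pow_rpow_inv_natCast (by positivity) hn.ne']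
  linarith

theorem specRad_finWordProd_rpow_le_genSpecRad {d K : ℕ} (S : Fin K → Matrix (Fin d) (Fin d) ℂ)
    {n : ℕ} (w : Fin n → Fin K) (hn : 0 < n) :
    specRad (finWordProd S w) ^ ((n : ℝ)⁻¹) ≤ genSpecRad S := by
  obtain ⟨B, hB0, hB⟩ := exists_specRad_finWordProd_rpow_le S
  refine le_limsup_of_frequently_le ?_
    (isBoundedUnder_of ⟨B, fun n => Real.iSup_le (hB n) hB0⟩)
  rw [frequently_atTop]
  intro a
  refine ⟨(a + 1) * n, by nlinarith, ?_⟩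
  obtain ⟨v, hv⟩ := exists_finWordProd_eq_pow S w hn (a + 1)
  refine le_trans ?_ (le_ciSup ⟨B, by rintro _ ⟨u, rfl⟩; exact hB _ u⟩ v)
  rw [hv]
  have h1 := specRad_pow_le (finWordProd S w) a.succ_ne_zero
  refine le_trans (le_of_eq ?_) (Real.rpow_le_rpow (pow_nonneg (specRad_nonneg _) _) h1
    (by positivity))
  rw [← Real.rpow_natCast, ← Real.rpow_mul (specRad_nonneg _)]
  congr 1
  push_cast
  field_simp

theorem list_prod_map_smul {d K : ℕ} (S : Fin K → Matrix (Fin d) (Fin d) ℂ) (c : ℂ)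
    (l : List (Fin K)) : (l.map fun i => c • S i).prod = c ^ l.length • (l.map S).prod := by
  induction l with
  | nil => simp
  | cons i l ih => simp [ih, smul_smul, pow_succ]

theorem wordProd_smul {d K : ℕ} (S : Fin K → Matrix (Fin d) (Fin d) ℂ) (c : ℂ) (x : ℕ → Fin K)
    (n : ℕ) : wordProd (fun i => c • S i) x n = c ^ n • wordProd S x n := by
  induction n with
  | zero => simp [wordProd]
  | succ n ih => rw [wordProd_succ, ih, wordProd_succ, smul_mul_smul_comm, pow_succ]

theorem norm_trace_le_of_mem_closure_smul {d K : ℕ} (S : Fin K → Matrix (Fin d) (Fin d) ℂ)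
    (hρ : 0 < genSpecRad S) {t : Matrix (Fin d) (Fin d) ℂ}
    (ht : t ∈ Submonoid.closure (Set.range fun i => (genSpecRad S : ℂ)⁻¹ • S i)) :
    ‖Matrix.trace t‖ ≤ d := by
  obtain ⟨l, hl, rfl⟩ := Submonoid.exists_list_of_mem_closure ht
  obtain ⟨l, rfl⟩ : l ∈ Set.range (List.map fun i => (genSpecRad S : ℂ)⁻¹ • S i) := by
    rwa [Set.range_list_map]
  rw [list_prod_map_smul]
  rcases l.length.eq_zero_or_pos with h0 | hn
  · simp [List.length_eq_zero_iff.1 h0]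
  have hw : (l.map S).prod = finWordProd S l.get := by
    rw [finWordProd, ← Function.comp_def S, ← List.map_ofFn, List.ofFn_get]
  have h1 := pow_le_pow_left₀ (Real.rpow_nonneg (specRad_nonneg _) _)
    (specRad_finWordProd_rpow_le_genSpecRad S l.get hn) l.length
  rw [Real.rpow_inv_natCast_pow (specRad_nonneg _) hn.ne'] at h1
  rw [hw, Matrix.trace_smul, norm_smul, norm_pow, norm_inv, Complex.norm_real,
    Real.norm_of_nonneg hρ.le, inv_pow, inv_mul_le_iff₀ (by positivity), mul_comm]
  exact (norm_trace_le_card_mul_specRad _).trans (mul_le_mul_of_nonneg_left h1 d.cast_nonneg)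

/-- If some extremal ergodic probability measure for `S` has full support (every point of
`Σ_K^+` is a density point), then `S` has the spectral finiteness property. -/
theorem finiteness_of_fully_supported_extremal_measure
    {d K : ℕ} (hd : 2 ≤ d) (hK : 2 ≤ K)
    (S : Fin K → Matrix (Fin d) (Fin d) ℂ) (ν : MatrixNorm d)
    (μ : Measure (ℕ → Fin K)) [IsProbabilityMeasure μ]
    (hergo : Ergodic (shift K) μ) (hext : IsExtremal S ν.N μ)
    (hsupp : ∀ x : ℕ → Fin K, DensityPoint μ x) :
    HasFinitenessProperty S := by
  let e : Fin K := ⟨0, by omega⟩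
  have hword : finWordProd S (fun _ : Fin 1 => e) = S e := by simp [finWordProd]
  have hle := specRad_finWordProd_rpow_le_genSpecRad S (fun _ : Fin 1 => e) one_pos
  refine ⟨1, le_rfl, fun _ => e, (hle.lt_or_eq.resolve_left fun hlt => ?_).symm⟩
  rw [hword, Nat.cast_one, inv_one, Real.rpow_one] at hlt
  have hρ : 0 < genSpecRad S := (specRad_nonneg _).trans_lt hlt
  refine not_tendsto_norm_wordProd_rpow_one (fun i => (genSpecRad S : ℂ)⁻¹ • S i) ν d.cast_nonneg
    (fun t ht => norm_trace_le_of_mem_closure_smul S hρ ht)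
    (tendsto_inv_smul_pow_of_specRad_lt _ hlt) μ hergo.toMeasurePreserving (hsupp _) ?_
  filter_upwards [hext] with x hx
  have h1 := hx.const_mul (genSpecRad S)⁻¹
  rw [inv_mul_cancel₀ hρ.ne'] at h1
  refine h1.congr' ?_
  filter_upwards [eventually_gt_atTop 0] with n hn
  rw [wordProd_smul, ν.homog, norm_pow, norm_inv, Complex.norm_real, Real.norm_of_nonneg hρ.le,
    Real.mul_rpow (by positivity) (ν.nonneg _),
    Real.pow_rpow_inv_natCast (by positivity) hn.ne']
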